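/- Let A and B be the companion matrices of f(x) = (x-1)^6 and g(x) = (x+1)^2(x^2+x+1)^2 respectively, regarded as elements of GL(6,ℤ). Then the elements t = A⁻¹B and r = A⁻¹BA both have infinite order, the subgroup of GL(6,ℤ) generated by A and B equals the subgroup generated by t and r, and this group is the internal free product of the cyclic subgroups ⟨t⟩ and ⟨r⟩; in particular, the hypergeometric group Γ(α,β) with α = (0,0,0,0,0,0) and β = (1/2,1/2,1/3,2/3,1/3,2/3) is isomorphic to ℤ * ℤ, a free group of rank 2. -/

import Mathlib

open Matrix

/-- The companion matrix of `f(x) = (x-1)^6 = x^6 - 6x^5 + 15x^4 - 20x^3 + 15x^2 - 6x + 1`. -/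
def companionF : Matrix (Fin 6) (Fin 6) ℤ :=
  !![0,0,0,0,0,-1; 1,0,0,0,0,6; 0,1,0,0,0,-15; 0,0,1,0,0,20; 0,0,0,1,0,-15; 0,0,0,0,1,6]

/-- The companion matrix of `g(x) = (x+1)^2(x^2+x+1)^2 = x^6 + 4x^5 + 8x^4 + 10x^3 + 8x^2 + 4x + 1`. -/
def companionG : Matrix (Fin 6) (Fin 6) ℤ :=
  !![0,0,0,0,0,-1; 1,0,0,0,0,-4; 0,1,0,0,0,-8; 0,0,1,0,0,-10; 0,0,0,1,0,-8; 0,0,0,0,1,-4]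

/-- The twelve generators (columns) of the ping-pong cone. -/
def ppG : Matrix (Fin 6) (Fin 12) ℤ :=
  !![-116, 122, -109, 13, -5, 1, -74, -400, -163, -98, -17, -11;
     -17, -171, 284, -45, 19, -5, -186, 338, 378, 121, 36, 12;
     -362, 286, -376, 65, -26, 10, -112, -964, -476, -335, -76, -40;
     -76, -212, 334, -55, 14, -10, -127, 379, 328, 131, 41, 17;
     -154, 0, -131, 30, -1, 5, -36, -278, -141, -115, -21, -15;
     5, -25, -2, -8, -1, -1, -5, 25, 2, 8, 1, 1]

/-- The direction of the transvection `t`. -/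
def ppV : Fin 6 → ℤ := ![-10, 7, -30, 7, -10, 0]

/-- The matrix of `-r`. -/
def ppR : Matrix (Fin 6) (Fin 6) ℤ :=
  !![0, 0, 0, 0, 10, 61;
     -1, 0, 0, 0, -7, -48;
     0, -1, 0, 0, 30, 195;
     0, 0, -1, 0, -7, -62;
     0, 0, 0, -1, 10, 75;
     0, 0, 0, 0, -1, -6]

/-- `ppR ^ 6 - 1`, a square-zero matrix. -/
def ppN : Matrix (Fin 6) (Fin 6) ℤ :=
  !![38, -76, 92, -70, 32, 4466;
     -32, 70, -98, 88, -50, -4844;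
     112, -212, 250, -188, 88, 12250;
     -38, 88, -122, 106, -56, -5936;
     32, -58, 68, -52, 26, 3374;
     -4, 8, -10, 8, -4, -490]

/-- The involution inverting `t` and `r`. -/
def ppE : Matrix (Fin 6) (Fin 6) ℤ :=
  !![0, 0, 0, 0, 1, 16;
     0, 0, 0, 1, 0, -22;
     0, 0, 1, 0, 0, 50;
     0, 1, 0, 0, 0, -22;
     1, 0, 0, 0, 0, 16;
     0, 0, 0, 0, 0, -1]

/-- The matrices `R, ..., R ^ 6, N R, ..., N R ^ 6`. -/
def ppM : Fin 12 → Matrix (Fin 6) (Fin 6) ℤ :=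
  ![!![0, 0, 0, 0, 10, 61;
       -1, 0, 0, 0, -7, -48;
       0, -1, 0, 0, 30, 195;
       0, 0, -1, 0, -7, -62;
       0, 0, 0, -1, 10, 75;
       0, 0, 0, 0, -1, -6],
    !![0, 0, 0, -10, 39, 384;
       0, 0, 0, 7, -32, -298;
       1, 0, 0, -30, 112, 1128;
       0, 1, 0, 7, -38, -348;
       0, 0, 1, -10, 32, 362;
       0, 0, 0, 1, -4, -39],
    !![0, 0, 10, -39, 76, 1241;
       0, 0, -7, 32, -71, -1046;
       0, 0, 30, -112, 212, 3553;
       -1, 0, -7, 38, -88, -1244;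
       0, -1, 10, -32, 58, 1043;
       0, 0, -1, 4, -8, -128],
    !![0, -10, 39, -76, 92, 2622;
       0, 7, -32, 71, -98, -2398;
       0, -30, 112, -212, 251, 7376;
       0, 7, -38, 88, -122, -2918;
       1, -10, 32, -58, 68, 2074;
       0, 1, -4, 8, -10, -275],
    !![10, -39, 76, -92, 70, 3965;
       -7, 32, -71, 98, -88, -3940;
       30, -112, 212, -251, 188, 10993;
       -7, 38, -88, 122, -107, -4844;
       10, -32, 58, -68, 52, 3033;
       -1, 4, -8, 10, -8, -424],
    !![39, -76, 92, -70, 32, 4466;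
       -32, 71, -98, 88, -50, -4844;
       112, -212, 251, -188, 88, 12250;
       -38, 88, -122, 107, -56, -5936;
       32, -58, 68, -52, 27, 3374;
       -4, 8, -10, 8, -4, -489],
    !![76, -92, 70, -32, 16, 3850;
       -70, 98, -88, 50, -22, -4564;
       212, -250, 188, -88, 50, 10514;
       -88, 122, -106, 56, -22, -5488;
       58, -68, 52, -26, 16, 2926;
       -8, 10, -8, 4, -2, -434],
    !![92, -70, 32, -16, 38, 2786;
       -98, 88, -50, 22, -32, -3500;
       250, -188, 88, -50, 112, 7714;
       -122, 106, -56, 22, -38, -4088;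
       68, -52, 26, -16, 32, 2198;
       -10, 8, -4, 2, -4, -322],
    !![70, -32, 16, -38, 76, 2338;
       -88, 50, -22, 32, -70, -2716;
       188, -88, 50, -112, 212, 6650;
       -106, 56, -22, 38, -88, -3136;
       52, -26, 16, -32, 58, 1918;
       -8, 4, -2, 4, -8, -266],
    !![32, -16, 38, -76, 92, 2954;
       -50, 22, -32, 70, -98, -2996;
       88, -50, 112, -212, 250, 8386;
       -56, 22, -38, 88, -122, -3584;
       26, -16, 32, -58, 68, 2366;
       -4, 2, -4, 8, -10, -322],
    !![16, -38, 76, -92, 70, 4018;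
       -22, 32, -70, 98, -88, -4060;
       50, -112, 212, -250, 188, 11186;
       -22, 38, -88, 122, -106, -4984;
       16, -32, 58, -68, 52, 3094;
       -2, 4, -8, 10, -8, -434],
    !![38, -76, 92, -70, 32, 4466;
       -32, 70, -98, 88, -50, -4844;
       112, -212, 250, -188, 88, 12250;
       -38, 88, -122, 106, -56, -5936;
       32, -58, 68, -52, 26, 3374;
       -4, 8, -10, 8, -4, -490]]

/-- Denominators of the certificates `P`. -/
def ppDP : Fin 12 → Fin 12 → ℤ :=
  ![![672, 35, 8, 1448, 96, 1, 1140, 228, 25, 60, 13440, 840],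
    ![5250, 224, 1120, 1680, 320, 840, 3360, 140, 224, 13440, 2240, 2240],
    ![2240, 2240, 448, 6000, 5380, 2240, 448, 448, 7000, 1920, 2240, 2240],
    ![3360, 28, 560, 42000, 448, 2240, 3360, 70, 140, 13440, 7000, 320],
    ![6720, 2240, 840, 16925, 2240, 320, 2175, 10, 2240, 725, 700, 1120],
    ![30, 60, 2240, 1920, 1120, 1120, 10, 160, 2240, 1450, 2100, 1120],
    ![35, 35, 700, 70, 950, 1120, 950, 950, 950, 475, 80, 175],
    ![10, 700, 700, 700, 350, 175, 25, 175, 100, 14, 725, 58],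
    ![950, 160, 280, 10, 100, 58, 1120, 100, 175, 2, 160, 224],
    ![25, 175, 20, 112, 3500, 224, 224, 1120, 3500, 140, 560, 175],
    ![1120, 1120, 1450, 700, 80, 175, 140, 25, 3500, 280, 700, 1120],
    ![224, 50, 140, 560, 1120, 1120, 10, 160, 175, 560, 1120, 1120]]

/-- Coefficients of the certificates `P`. -/
def ppCP : Fin 12 → Matrix (Fin 12) (Fin 12) ℤ :=
  ![!![2733, 0, 0, 0, 0, 3993, 1245, 2064, 0, 0, 20224, 8057;
       205, 43, 0, 0, 0, 0, 55, 128, 0, 0, 991, 1384;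
       30, 7, 0, 0, 16, 503, 0, 17, 0, 0, 0, 1263;
       450, 285, 0, 232, 0, 10333, 0, 435, 0, 0, 0, 32253;
       5, 8, 0, 0, 0, 297, 5, 8, 0, 0, 0, 969;
       0, 0, 0, 0, 0, 1, 0, 0, 0, 0, 0, 2;
       1860, 0, 0, 2232, 5735, 6649, 0, 1950, 0, 0, 0, 47430;
       720, 0, 0, 408, 2581, 6839, 0, 582, 0, 0, 0, 23718;
       75, 0, 0, 0, 15, 2035, 0, 30, 0, 6, 0, 4102;
       132, 0, 0, 0, 0, 0, 78, 66, 42, 0, 569, 1447;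
       3431, 296, 0, 0, 0, 112515, 839, 2504, 0, 0, 0, 245955;
       241, 61, 0, 0, 0, 0, 79, 199, 0, 0, 1350, 1950],
    !![44155, 3433, 0, 0, 0, 0, 25855, 51883, 0, 0, 435146, 73354;
       5105, 0, 0, 0, 21037, 0, 1985, 4176, 0, 0, 13091, 58858;
       32919, 0, 0, 0, 176152, 21603, 9831, 23712, 0, 0, 0, 537835;
       7851, 1311, 0, 0, 0, 0, 2469, 6129, 0, 0, 46180, 36620;
       541, 0, 0, 0, 1968, 3737, 109, 368, 0, 0, 0, 12585;
       241, 61, 0, 0, 0, 0, 79, 199, 0, 0, 1350, 1950;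
       20049, 0, 0, 0, 109005, 0, 6561, 17712, 0, 0, 26947, 284138;
       2053, 0, 0, 0, 12624, 461, 697, 1684, 0, 0, 0, 36445;
       5497, 0, 0, 0, 29256, 8077, 1705, 4064, 0, 0, 0, 99109;
       105801, 0, 0, 0, 587205, 0, 39129, 90768, 0, 0, 100763, 1633642;
       5743, 0, 0, 0, 0, 43795, 1567, 4304, 0, 0, 28624, 79331;
       2497, 0, 0, 0, 11485, 0, 913, 2096, 0, 0, 5011, 31274],
    !![27827, 0, 0, 0, 188295, 0, 15523, 40016, 0, 0, 102761, 479614;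
       114483, 0, 0, 0, 368135, 0, 58467, 124624, 0, 0, 657929, 942366;
       36611, 0, 0, 0, 105239, 0, 17075, 35632, 0, 0, 194569, 273358;
       88885, 6001, 0, 0, 0, 0, 39835, 82951, 0, 0, 712712, 112288;
       38296, 0, 3260, 0, 0, 0, 16144, 30518, 0, 0, 264743, 40907;
       2497, 0, 0, 0, 11485, 0, 913, 2096, 0, 0, 5011, 31274;
       5875, 0, 0, 0, 18503, 0, 2979, 6416, 0, 0, 34889, 47070;
       17443, 0, 0, 0, 65463, 0, 8083, 17680, 0, 0, 78137, 172318;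
       527495, 36307, 0, 0, 0, 0, 249545, 522357, 0, 0, 4443984, 635016;
       36477, 0, 0, 0, 127785, 0, 17613, 38736, 0, 0, 187831, 326834;
       17309, 0, 0, 0, 53065, 0, 7661, 16432, 0, 0, 84167, 137058;
       5573, 0, 0, 0, 16465, 0, 2837, 6064, 0, 0, 33919, 41266],
    !![56043, 0, 0, 0, 0, 509055, 29787, 92304, 0, 0, 633904, 755951;
       2109, 0, 0, 0, 10733, 0, 1257, 3028, 0, 0, 12475, 26490;
       75287, 0, 0, 0, 286155, 0, 43943, 98536, 0, 0, 501201, 704034;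
       1157305, 76693, 0, 0, 0, 0, 663655, 1413043, 0, 0, 11843416, 789584;
       5455, 0, 0, 0, 15731, 0, 3007, 6416, 0, 0, 37437, 38614;
       5573, 0, 0, 0, 16465, 0, 2837, 6064, 0, 0, 33919, 41266;
       63339, 0, 0, 0, 332895, 0, 38331, 92112, 0, 0, 371537, 829678;
       4693, 0, 0, 0, 20065, 0, 2617, 6054, 0, 0, 27599, 49906;
       17721, 0, 0, 0, 0, 65825, 9969, 22338, 0, 0, 179213, 96642;
       397671, 0, 0, 0, 1820715, 0, 231639, 547248, 0, 0, 2442773, 4475542;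
       96555, 6743, 0, 0, 0, 0, 57405, 124093, 0, 0, 1031766, 59734;
       1121, 0, 0, 0, 5565, 0, 689, 1648, 0, 0, 7123, 13642],
    !![131511, 0, 0, 0, 1500795, 0, 67239, 243408, 0, 0, 101333, 3702022;
       175641, 0, 0, 0, 1830805, 0, 109929, 342448, 0, 0, 488763, 4516922;
       138379, 22447, 0, 0, 0, 0, 94621, 249049, 0, 0, 1869216, 217704;
       163710, 0, 0, 0, 4397000, 0, 600090, 694020, 0, 2369113, 0, 2246821;
       33227, 0, 0, 0, 210495, 0, 21563, 54736, 0, 0, 195761, 516654;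
       1121, 0, 0, 0, 5565, 0, 689, 1648, 0, 0, 7123, 13642;
       0, 0, 0, 0, 146602, 402848, 54525, 60270, 0, 264924, 162633, 0;
       811, 0, 0, 0, 0, 6235, 499, 1378, 0, 0, 9878, 9127;
       334567, 0, 0, 0, 2491435, 0, 212503, 574256, 0, 0, 1654101, 6126934;
       0, 0, 0, 0, 164390, 94210, 29700, 30555, 0, 142171, 0, 28357;
       11335, 1723, 0, 0, 0, 0, 7825, 20113, 0, 0, 152366, 16434;
       3723, 0, 0, 0, 43455, 0, 2427, 7824, 0, 0, 8529, 107246],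
    !![0, 0, 0, 0, 4325, 5695, 690, 930, 0, 3768, 0, 5406;
       3881, 371, 0, 0, 60810, 0, 2099, 10229, 0, 0, 0, 154230;
       252583, 0, 0, 0, 0, 5038315, 146647, 677744, 0, 0, 3976864, 7426251;
       52239, 0, 0, 0, 778112, 46003, 32511, 125232, 0, 0, 0, 1991475;
       13371, 0, 0, 0, 205168, 13247, 8619, 33168, 0, 0, 0, 526895;
       3723, 0, 0, 0, 43455, 0, 2427, 7824, 0, 0, 8529, 107246;
       0, 0, 0, 0, 1445, 2225, 190, 330, 0, 1032, 0, 3124;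
       11451, 0, 0, 0, 165168, 13087, 6699, 26608, 0, 0, 0, 427375;
       274193, 0, 0, 0, 4142944, 514061, 165857, 678544, 0, 0, 0, 10998765;
       0, 0, 0, 0, 343905, 448595, 42300, 75510, 0, 216442, 0, 728414;
       28795, 9739, 0, 0, 0, 0, 19885, 71929, 0, 0, 482658, 99942;
       2463, 0, 0, 0, 41904, 26611, 1167, 7824, 0, 0, 0, 143075],
    !![561, 0, 0, 0, 8223, 3972, 219, 1458, 0, 0, 0, 26115;
       1446, 0, 0, 0, 23778, 27102, 204, 4908, 0, 0, 0, 97950;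
       73205, 40337, 0, 0, 0, 0, 32435, 220667, 0, 0, 1336074, 382026;
       1209, 0, 0, 0, 20997, 19188, 381, 4182, 0, 0, 0, 79755;
       9000, 0, 0, 15816, 120372, 0, 0, 26370, 0, 0, 1333, 424817;
       2463, 0, 0, 0, 0, 67395, 1167, 7824, 0, 0, 41904, 98931;
       18000, 0, 0, 29352, 93684, 0, 0, 38490, 0, 0, 100801, 469349;
       72000, 0, 0, 155256, 66252, 0, 0, 161370, 0, 0, 721853, 1430497;
       101700, 0, 0, 184056, 1014852, 0, 0, 273870, 0, 0, 273803, 3995347;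
       8100, 0, 0, 7212, 122635, 94319, 0, 26640, 0, 0, 0, 497250;
       471, 0, 0, 0, 8928, 12507, 39, 1968, 0, 0, 0, 40155;
       270, 66, 0, 0, 4797, 3153, 0, 996, 0, 0, 0, 16950],
    !![180, 0, 0, 264, 1308, 0, 0, 390, 0, 0, 667, 5363;
       30510, 4623, 0, 0, 0, 619575, 0, 78213, 0, 0, 411966, 941109;
       53190, 20247, 0, 0, 632175, 0, 0, 146757, 0, 0, 165099, 1729776;
       10890, 3537, 0, 0, 175104, 30921, 0, 34047, 0, 0, 0, 506025;
       2705, 1769, 0, 0, 0, 0, 275, 8039, 0, 0, 46248, 15852;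
       270, 66, 0, 0, 4797, 3153, 0, 996, 0, 0, 0, 16950;
       450, 0, 0, 576, 0, 2892, 0, 870, 0, 0, 4605, 8895;
       7020, 771, 0, 0, 107082, 94893, 0, 21801, 0, 0, 0, 407625;
       7290, 2697, 0, 0, 114225, 0, 0, 22107, 0, 0, 1749, 304176;
       234, 81, 0, 0, 2865, 0, 0, 621, 0, 0, 528, 7743;
       0, 0, 0, 20625, 0, 0, 450, 9855, 0, 42141, 10140, 12957;
       0, 0, 0, 0, 481, 2279, 36, 162, 0, 552, 0, 2478],
    !![18000, 0, 0, 24792, 73164, 0, 0, 32790, 0, 0, 103271, 381379;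
       9237, 0, 0, 0, 97776, 24369, 1893, 15216, 0, 0, 0, 276225;
       25959, 0, 0, 0, 260352, 112443, 2631, 41712, 0, 0, 0, 802635;
       180, 6, 0, 0, 1917, 1233, 0, 336, 0, 0, 0, 6540;
       810, 93, 0, 0, 8406, 1119, 0, 1383, 0, 0, 0, 23025;
       0, 0, 0, 0, 481, 2279, 36, 162, 0, 552, 0, 2478;
       19431, 0, 0, 0, 228048, 45147, 6039, 36048, 0, 0, 0, 628875;
       6035, 2039, 0, 0, 0, 0, 1445, 11549, 0, 0, 77478, 18822;
       18155, 5609, 0, 0, 0, 0, 3575, 31679, 0, 0, 217428, 51222;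
       42, 0, 0, 0, 0, 558, 6, 66, 0, 0, 423, 813;
       1383, 0, 0, 0, 13104, 5691, 87, 2064, 0, 0, 0, 40395;
       597, 0, 0, 0, 5217, 0, 165, 816, 0, 0, 687, 12882],
    !![0, 0, 0, 0, 157, 6593, 450, 570, 0, 2784, 2478, 0;
       15005, 2207, 0, 0, 0, 0, 7985, 23237, 0, 0, 181014, 24636;
       2989, 361, 0, 0, 0, 0, 1531, 4243, 0, 0, 34194, 4146;
       3105, 0, 0, 0, 22173, 0, 1233, 4320, 0, 0, 10299, 55122;
       47585, 5141, 0, 0, 0, 0, 21935, 61991, 0, 0, 513042, 58458;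
       597, 0, 0, 0, 5217, 0, 165, 816, 0, 0, 687, 12882;
       4503, 0, 0, 0, 51291, 0, 2055, 8208, 0, 0, 3669, 127206;
       78213, 0, 0, 0, 691665, 0, 29397, 117744, 0, 0, 150879, 1714386;
       499195, 64927, 0, 0, 0, 0, 233245, 697477, 0, 0, 5598174, 715326;
       4609, 565, 0, 0, 0, 0, 2431, 6667, 0, 0, 53472, 6528;
       7599, 0, 0, 0, 36915, 0, 3711, 10032, 0, 0, 43437, 92838;
       670, 76, 0, 0, 0, 0, 400, 1006, 0, 0, 8067, 933],
    !![22761, 0, 0, 0, 262245, 0, 10809, 42288, 0, 0, 20043, 650682;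
       89283, 0, 0, 0, 952215, 0, 53427, 173904, 0, 0, 227289, 2373726;
       0, 0, 0, 0, 1416797, 860503, 277200, 273870, 0, 1333464, 94938, 0;
       25065, 3597, 0, 0, 0, 0, 15975, 41907, 0, 0, 323424, 42576;
       1191, 0, 0, 0, 7755, 0, 759, 1968, 0, 0, 6933, 19542;
       670, 76, 0, 0, 0, 0, 400, 1006, 0, 0, 8067, 933;
       2769, 0, 0, 0, 37092, 1713, 1401, 5832, 0, 0, 0, 94485;
       1020, 0, 0, 0, 19050, 0, 1830, 2940, 0, 6336, 0, 24612;
       580645, 85177, 0, 0, 0, 0, 376795, 986827, 0, 0, 7581774, 1008726;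
       8931, 0, 0, 0, 82935, 0, 5619, 16728, 0, 0, 33813, 207402;
       11335, 1723, 0, 0, 0, 0, 7825, 20113, 0, 0, 153066, 20634;
       3723, 0, 0, 0, 43455, 0, 2427, 7824, 0, 0, 8529, 108366],
    !![4329, 0, 0, 0, 59088, 5973, 2169, 9456, 0, 0, 0, 155205;
       0, 0, 0, 0, 29485, 40415, 3600, 6570, 0, 18984, 0, 63678;
       15963, 0, 0, 0, 249264, 60951, 9267, 42384, 0, 0, 0, 707295;
       15327, 0, 0, 0, 227016, 13179, 9423, 36576, 0, 0, 0, 583155;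
       13371, 0, 0, 0, 204048, 14367, 8619, 33168, 0, 0, 0, 528015;
       3723, 0, 0, 0, 43455, 0, 2427, 7824, 0, 0, 8529, 108366;
       0, 0, 0, 0, 1445, 2275, 180, 330, 0, 1032, 0, 3174;
       11451, 0, 0, 0, 165168, 9087, 6699, 26448, 0, 0, 0, 423375;
       26300, 7634, 0, 0, 0, 0, 17930, 60614, 0, 0, 415788, 80562;
       13437, 0, 0, 0, 211896, 64209, 7533, 36576, 0, 0, 0, 619065;
       12111, 0, 0, 0, 193968, 48387, 7359, 33168, 0, 0, 0, 551955;
       2463, 0, 0, 0, 0, 67395, 1167, 7824, 0, 0, 41904, 98931]]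

/-- Denominators of the certificates `Q`. -/
def ppDQ : Fin 12 → Fin 12 → ℤ :=
  ![![1, 1, 1, 2, 1, 1, 1740, 12, 150, 25, 300, 300],
    ![225, 6, 900, 50, 900, 300, 1350, 75, 180, 50, 900, 900],
    ![840, 100, 30, 900, 900, 900, 180, 20, 150, 300, 150, 100],
    ![3360, 35, 300, 150, 20, 100, 2100, 75, 420, 1425, 150, 200],
    ![2900, 2240, 950, 475, 2240, 200, 2175, 40, 2240, 475, 950, 1120],
    ![10, 160, 2325, 240, 1120, 1120, 224, 160, 2240, 2175, 1120, 1450],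
    ![140, 25, 3500, 280, 700, 1120, 1120, 1120, 1450, 700, 80, 175],
    ![224, 1120, 3500, 140, 560, 175, 25, 175, 20, 112, 3500, 224],
    ![1120, 100, 175, 2, 160, 224, 950, 160, 280, 10, 100, 58],
    ![25, 175, 100, 14, 725, 58, 10, 700, 700, 725, 350, 175],
    ![950, 950, 1120, 475, 80, 175, 35, 35, 725, 70, 950, 1120],
    ![10, 160, 175, 560, 1120, 1120, 224, 50, 140, 560, 1120, 1120]]

/-- Coefficients of the certificates `Q`. -/
def ppCQ : Fin 12 → Matrix (Fin 12) (Fin 12) ℤ :=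
  ![!![1, 2, 2, 8, 5, 6, 0, 0, 0, 0, 0, 0;
       0, 1, 2, 12, 10, 15, 0, 0, 0, 0, 0, 0;
       0, 0, 1, 12, 15, 30, 0, 0, 0, 0, 0, 0;
       0, 0, 0, 2, 5, 15, 0, 0, 0, 0, 0, 0;
       0, 0, 0, 0, 1, 6, 0, 0, 0, 0, 0, 0;
       0, 0, 0, 0, 0, 1, 0, 0, 0, 0, 0, 0;
       240, 1950, 0, 8088, 16015, 7871, 0, 0, 0, 0, 0, 21300;
       0, 24, 0, 120, 19, 257, 0, 6, 0, 0, 150, 0;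
       0, 42, 162, 1392, 1367, 5773, 0, 12, 0, 0, 0, 0;
       0, 28, 8, 103, 203, 132, 0, 8, 0, 0, 0, 0;
       0, 42, 12, 192, 667, 1523, 0, 12, 0, 0, 0, 0;
       0, 42, 12, 192, 367, 23, 0, 12, 0, 0, 0, 0],
    !![0, 1815, 205, 4913, 0, 15936, 0, 0, 0, 2395, 4240, 0;
       0, 84, 0, 384, 245, 61, 0, 0, 36, 0, 0, 828;
       0, 12870, 7680, 53904, 0, 202758, 0, 0, 0, 0, 58255, 70445;
       0, 90, 60, 478, 535, 1021, 0, 0, 0, 0, 0, 900;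
       0, 630, 420, 3696, 4595, 6847, 0, 0, 0, 0, 0, 6300;
       0, 42, 12, 192, 367, 23, 0, 12, 0, 0, 0, 0;
       0, 5310, 1560, 17112, 19045, 63239, 0, 0, 0, 0, 0, 68850;
       0, 660, 0, 3475, 2125, 0, 0, 0, 265, 233, 0, 5331;
       0, 2250, 0, 13872, 2154, 0, 0, 0, 1248, 0, 6643, 13721;
       0, 255, 0, 1215, 805, 0, 0, 0, 90, 109, 0, 1898;
       0, 1170, 0, 7464, 1038, 0, 0, 0, 600, 0, 4147, 7253;
       0, 630, 240, 2796, 1625, 1177, 0, 0, 0, 900, 0, 0],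
    !![1213, 18637, 0, 0, 114498, 33282, 5827, 3631, 0, 0, 0, 0;
       0, 5760, 0, 9336, 24425, 24787, 0, 1030, 0, 0, 0, 35550;
       0, 2658, 0, 4884, 6311, 2437, 0, 708, 0, 0, 6090, 0;
       0, 9090, 0, 33108, 0, 64086, 0, 0, 2820, 0, 25175, 76285;
       0, 3870, 1320, 10104, 12815, 48163, 0, 0, 0, 0, 0, 45000;
       0, 630, 240, 2796, 1625, 1177, 0, 0, 0, 900, 0, 0;
       0, 2652, 0, 4344, 0, 23688, 0, 462, 0, 0, 10889, 6541;
       0, 842, 0, 1560, 419, 4391, 0, 192, 0, 0, 3460, 0;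
       0, 11550, 0, 22236, 30305, 5107, 0, 3120, 0, 0, 25050, 0;
       0, 6270, 0, 11004, 0, 47718, 0, 1200, 0, 0, 27235, 8765;
       0, 885, 0, 3605, 1835, 0, 0, 0, 230, 733, 0, 4476;
       0, 280, 0, 456, 0, 2352, 0, 50, 0, 0, 1165, 585],
    !![1647, 92304, 0, 0, 473744, 1329811, 27903, 0, 0, 0, 0, 922755;
       0, 4218, 0, 0, 0, 59345, 1065, 433, 0, 0, 21606, 2449;
       0, 48300, 0, 62688, 165265, 688631, 0, 1110, 0, 0, 0, 639150;
       0, 4185, 300, 13107, 7505, 12664, 0, 0, 0, 7125, 0, 0;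
       0, 284, 0, 408, 1083, 2313, 0, 34, 0, 0, 0, 2510;
       0, 280, 0, 456, 0, 2352, 0, 50, 0, 0, 1165, 585;
       0, 63339, 0, 0, 0, 943125, 15630, 5769, 0, 0, 319798, 80627;
       0, 5895, 0, 8304, 20660, 82183, 0, 150, 0, 0, 0, 78075;
       382, 85672, 0, 0, 490425, 139665, 23638, 18658, 0, 0, 0, 0;
       0, 53055, 0, 55641, 191240, 824707, 2700, 0, 0, 0, 0, 721875;
       0, 2355, 0, 6657, 5320, 4199, 0, 120, 0, 3525, 0, 0;
       0, 1121, 0, 0, 5522, 11653, 270, 91, 0, 0, 0, 7675],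
    !![32900, 84830, 0, 226376, 353515, 658727, 0, 0, 0, 0, 0, 1021100;
       38389, 342448, 0, 0, 1789808, 4456417, 104101, 0, 0, 0, 0, 3071345;
       0, 272730, 0, 0, 352767, 3758683, 98850, 0, 0, 184284, 935128, 0;
       0, 25860, 0, 0, 118840, 362060, 6900, 0, 0, 4993, 0, 224681;
       983, 54736, 0, 0, 250576, 830459, 12647, 0, 0, 0, 0, 579115;
       0, 1121, 0, 0, 5522, 11653, 270, 91, 0, 0, 0, 7675;
       26625, 69570, 0, 160764, 292435, 576278, 0, 0, 0, 0, 0, 794250;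
       201, 5512, 0, 0, 26632, 80293, 1449, 0, 0, 0, 0, 55845;
       24343, 574256, 0, 0, 2745536, 8357419, 146407, 0, 0, 0, 0, 5813355;
       0, 30555, 0, 0, 88792, 340733, 12150, 0, 0, 24859, 57778, 0;
       0, 26370, 0, 0, 8933, 403917, 9000, 0, 0, 15816, 113722, 0;
       1167, 7824, 0, 0, 41904, 96691, 2463, 0, 0, 0, 0, 66275],
    !![170, 330, 0, 1032, 1445, 1779, 0, 0, 0, 0, 0, 3770;
       6699, 26288, 0, 0, 0, 419375, 11451, 0, 0, 0, 165168, 5087;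
       450360, 516690, 0, 2200800, 0, 0, 0, 0, 54477, 0, 2494048, 926198;
       4807, 18139, 0, 0, 120404, 25516, 7273, 2485, 0, 0, 0, 0;
       7359, 33168, 0, 0, 0, 549715, 12111, 0, 0, 0, 192848, 48387;
       1167, 7824, 0, 0, 41904, 96691, 2463, 0, 0, 0, 0, 66275;
       2169, 9456, 0, 0, 59088, 94997, 4105, 0, 0, 0, 0, 63941;
       5179, 26608, 0, 0, 0, 450655, 9931, 0, 0, 0, 154128, 47407;
       149897, 678544, 0, 0, 3999584, 7230741, 258233, 0, 0, 0, 0, 4888565;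
       75600, 109215, 0, 370023, 0, 748791, 0, 0, 0, 0, 529570, 516230;
       8619, 33168, 0, 0, 0, 529135, 13371, 0, 0, 0, 202928, 15487;
       6300, 7470, 0, 29784, 30028, 0, 0, 0, 0, 0, 8907, 56493],
    !![1401, 5832, 0, 0, 0, 94485, 2769, 0, 0, 0, 37092, 1713;
       1830, 2940, 0, 6336, 0, 24612, 1020, 0, 0, 0, 19050, 0;
       376795, 986827, 0, 0, 7581774, 1008726, 580645, 85177, 0, 0, 0, 0;
       5619, 16728, 0, 0, 33813, 207402, 8931, 0, 0, 0, 82935, 0;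
       7825, 20113, 0, 0, 153066, 20634, 11335, 1723, 0, 0, 0, 0;
       2427, 7824, 0, 0, 8529, 108366, 3723, 0, 0, 0, 43455, 0;
       10809, 42288, 0, 0, 20043, 650682, 22761, 0, 0, 0, 262245, 0;
       53427, 173904, 0, 0, 227289, 2373726, 89283, 0, 0, 0, 952215, 0;
       277200, 273870, 0, 1333464, 94938, 0, 0, 0, 0, 0, 1416797, 860503;
       15975, 41907, 0, 0, 323424, 42576, 25065, 3597, 0, 0, 0, 0;
       759, 1968, 0, 0, 6933, 19542, 1191, 0, 0, 0, 7755, 0;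
       400, 1006, 0, 0, 8067, 933, 670, 76, 0, 0, 0, 0],
    !![2055, 8208, 0, 0, 3669, 127206, 4503, 0, 0, 0, 51291, 0;
       29397, 117744, 0, 0, 150879, 1714386, 78213, 0, 0, 0, 691665, 0;
       233245, 697477, 0, 0, 5598174, 715326, 499195, 64927, 0, 0, 0, 0;
       2431, 6667, 0, 0, 53472, 6528, 4609, 565, 0, 0, 0, 0;
       3711, 10032, 0, 0, 43437, 92838, 7599, 0, 0, 0, 36915, 0;
       400, 1006, 0, 0, 8067, 933, 670, 76, 0, 0, 0, 0;
       450, 570, 0, 2784, 2478, 0, 0, 0, 0, 0, 157, 6593;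
       7985, 23237, 0, 0, 181014, 24636, 15005, 2207, 0, 0, 0, 0;
       1531, 4243, 0, 0, 34194, 4146, 2989, 361, 0, 0, 0, 0;
       1233, 4320, 0, 0, 10299, 55122, 3105, 0, 0, 0, 22173, 0;
       21935, 61991, 0, 0, 513042, 58458, 47585, 5141, 0, 0, 0, 0;
       165, 816, 0, 0, 687, 12882, 597, 0, 0, 0, 5217, 0],
    !![6039, 36048, 0, 0, 0, 628875, 19431, 0, 0, 0, 228048, 45147;
       1445, 11549, 0, 0, 77478, 18822, 6035, 2039, 0, 0, 0, 0;
       3575, 31679, 0, 0, 217428, 51222, 18155, 5609, 0, 0, 0, 0;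
       6, 66, 0, 0, 423, 813, 42, 0, 0, 0, 0, 558;
       87, 2064, 0, 0, 0, 40395, 1383, 0, 0, 0, 13104, 5691;
       165, 816, 0, 0, 687, 12882, 597, 0, 0, 0, 5217, 0;
       0, 32790, 0, 0, 103271, 381379, 18000, 0, 0, 24792, 73164, 0;
       1893, 15216, 0, 0, 0, 276225, 9237, 0, 0, 0, 97776, 24369;
       2631, 41712, 0, 0, 260352, 542283, 25959, 0, 0, 0, 0, 372795;
       0, 336, 0, 0, 1917, 4623, 180, 6, 0, 0, 0, 3150;
       0, 1383, 0, 0, 8406, 14619, 810, 93, 0, 0, 0, 9525;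
       36, 162, 0, 552, 481, 1997, 0, 0, 0, 0, 0, 2760],
    !![0, 870, 0, 0, 4605, 8895, 450, 0, 0, 576, 0, 2892;
       0, 21801, 0, 0, 0, 407625, 7020, 771, 0, 0, 107082, 94893;
       0, 22107, 0, 0, 1749, 304176, 7290, 2697, 0, 0, 114225, 0;
       0, 621, 0, 0, 528, 7743, 234, 81, 0, 0, 2865, 0;
       450, 9855, 0, 42141, 10140, 12957, 0, 0, 0, 20625, 0, 0;
       36, 162, 0, 552, 481, 1997, 0, 0, 0, 0, 0, 2760;
       0, 390, 0, 0, 667, 5363, 180, 0, 0, 264, 1308, 0;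
       0, 78213, 0, 0, 411966, 941109, 30510, 4623, 0, 0, 0, 619575;
       0, 146757, 0, 0, 165099, 1729776, 53190, 20247, 0, 0, 632175, 0;
       3600, 26640, 0, 55548, 84495, 382371, 0, 0, 0, 0, 0, 402150;
       275, 8039, 0, 0, 46248, 15852, 2705, 1769, 0, 0, 0, 0;
       0, 996, 0, 0, 4797, 12153, 270, 66, 0, 0, 0, 7950],
    !![0, 38490, 0, 0, 100801, 469349, 18000, 0, 0, 29352, 93684, 0;
       0, 161370, 0, 0, 721853, 1430497, 72000, 0, 0, 155256, 66252, 0;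
       23007, 303504, 0, 0, 1493424, 4381251, 84783, 0, 0, 0, 0, 2998995;
       0, 26640, 0, 0, 0, 497250, 8100, 0, 0, 7212, 122635, 94319;
       39, 1968, 0, 0, 8928, 31227, 471, 0, 0, 0, 0, 21435;
       0, 996, 0, 0, 4797, 12153, 270, 66, 0, 0, 0, 7950;
       219, 1458, 0, 0, 0, 26115, 561, 0, 0, 0, 8223, 3972;
       204, 4908, 0, 0, 23778, 74172, 1446, 0, 0, 0, 0, 50880;
       40050, 159345, 0, 563739, 376110, 43053, 0, 0, 0, 256575, 0, 0;
       381, 4182, 0, 0, 20997, 58758, 1209, 0, 0, 0, 0, 40185;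
       0, 26370, 0, 0, 1333, 424817, 9000, 0, 0, 15816, 120372, 0;
       1167, 7824, 0, 0, 41904, 98931, 2463, 0, 0, 0, 0, 67395],
    !![180, 330, 0, 1032, 1445, 1729, 0, 0, 0, 0, 0, 3720;
       6699, 26448, 0, 0, 0, 423375, 11451, 0, 0, 0, 165168, 9087;
       17930, 60614, 0, 0, 415788, 80562, 26300, 7634, 0, 0, 0, 0;
       7533, 36576, 0, 0, 0, 619065, 13437, 0, 0, 0, 211896, 64209;
       7359, 33168, 0, 0, 0, 551955, 12111, 0, 0, 0, 193968, 48387;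
       1167, 7824, 0, 0, 41904, 98931, 2463, 0, 0, 0, 0, 67395;
       2169, 9456, 0, 0, 59088, 96117, 4329, 0, 0, 0, 0, 65061;
       3600, 6570, 0, 18984, 29485, 34193, 0, 0, 0, 0, 0, 69900;
       9267, 42384, 0, 0, 0, 707295, 15963, 0, 0, 0, 249264, 60951;
       9423, 36576, 0, 0, 0, 583155, 15327, 0, 0, 0, 227016, 13179;
       8619, 33168, 0, 0, 0, 528015, 13371, 0, 0, 0, 204048, 14367;
       2427, 7824, 0, 0, 8529, 108366, 3723, 0, 0, 0, 43455, 0]]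

theorem pp_DP : ∀ k j, 0 < ppDP k j := by decide +kernel

theorem pp_CP : ∀ k j l : Fin 12, (0 : ℤ) ≤ ppCP k j l := by
  have h : ∀ k j : Fin 12, ∀ l : Fin 12, decide ((0 : ℤ) ≤ ppCP k j l) = true := by
    decide +kernel
  exact fun k j l => of_decide_eq_true (h k j l)

theorem pp_certP : ∀ k j i,
    ppDP k j * ((ppM k * ppG) 5 j * ppV i + (ppM k * ppG) i j) =
      ∑ l, ppG i l * ppCP k j l := by decide +kernel

theorem pp_DQ : ∀ k j, 0 < ppDQ k j := by decide +kernel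

theorem pp_CQ : ∀ k j l : Fin 12, (0 : ℤ) ≤ ppCQ k j l := by
  have h : ∀ k j : Fin 12, ∀ l : Fin 12, decide ((0 : ℤ) ≤ ppCQ k j l) = true := by
    decide +kernel
  exact fun k j l => of_decide_eq_true (h k j l)

theorem pp_certQ : ∀ k j i,
    ppDQ k j * ((ppM k * ppG) 5 j * ppV i - (ppM k * ppG) i j) =
      ∑ l, ppG i l * ppCQ k j l := by decide +kernel

theorem pp_phi_nonneg : ∀ k j, 0 ≤ (ppM k * ppG) 5 j := by decide +kernel

theorem pp_phi_pos : ∀ k : Fin 6, ∀ j, 0 < (ppM (Fin.castLE (by omega) k) * ppG) 5 j := by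
  decide +kernel

theorem ppM_zero : ppM 0 = ppR := by decide +kernel

theorem ppM_step : ∀ k : Fin 5, ppM (Fin.castLE (by omega) k.castSucc) * ppR =
    ppM (Fin.castLE (by omega) k.succ) := by decide +kernel

theorem ppM_N : ∀ k : Fin 6, ppM (Fin.natAdd 6 k) =
    ppN * ppM (Fin.castLE (by omega) k) := by decide +kernel

theorem ppM_five : ppM 5 = 1 + ppN := by decide +kernel

theorem ppN_sq : ppN * ppN = 0 := by decide +kernel

theorem ppE_sq : ppE * ppE = 1 := by decide +kernel

theorem ppE_v : ppE *ᵥ ppV = ppV := by decide +kernel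

/-- The permutation of the generators induced by `ppE`. -/
theorem ppE_G : ∀ i j, (ppE * ppG) i j = ppG i (j + 6) := by decide +kernel

theorem ppRER : ppR * (ppE * ppR * ppE) = 1 := by decide +kernel

theorem ppE_five : ∀ j, ppE 5 j = if j = 5 then -1 else 0 := by decide +kernel

/-! ### The cone -/

/-- The ping-pong cone: rational nonnegative combinations of the columns of `ppG`. -/
def ppZ : Set (Fin 6 → ℤ) :=
  {x | ∃ d : ℤ, 0 < d ∧ ∃ c : Fin 12 → ℤ, (∀ l, 0 ≤ c l) ∧ ∀ i, d * x i = ∑ l, ppG i l * c l}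

theorem ppZ_zero : (0 : Fin 6 → ℤ) ∈ ppZ :=
  ⟨1, one_pos, 0, fun _ => le_rfl, fun i => by simp⟩

theorem ppZ_add {x y : Fin 6 → ℤ} (hx : x ∈ ppZ) (hy : y ∈ ppZ) : x + y ∈ ppZ := by
  obtain ⟨d, hd, c, hc, h⟩ := hx
  obtain ⟨d', hd', c', hc', h'⟩ := hy
  refine ⟨d * d', mul_pos hd hd', fun l => d' * c l + d * c' l, fun l => ?_, fun i => ?_⟩
  · have := mul_nonneg hd'.le (hc l)
    have := mul_nonneg hd.le (hc' l)
    linarith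
  · have e : ∑ l, ppG i l * (d' * c l + d * c' l) =
        d' * ∑ l, ppG i l * c l + d * ∑ l, ppG i l * c' l := by
      rw [Finset.mul_sum, Finset.mul_sum, ← Finset.sum_add_distrib]
      exact Finset.sum_congr rfl fun l _ => by ring
    rw [e, ← h, ← h', Pi.add_apply]
    ring

theorem ppZ_smul {x : Fin 6 → ℤ} {a : ℤ} (ha : 0 ≤ a) (hx : x ∈ ppZ) : a • x ∈ ppZ := by
  obtain ⟨d, hd, c, hc, h⟩ := hx
  refine ⟨d, hd, fun l => a * c l, fun l => mul_nonneg ha (hc l), fun i => ?_⟩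
  have e : ∑ l, ppG i l * (a * c l) = a * ∑ l, ppG i l * c l := by
    rw [Finset.mul_sum]
    exact Finset.sum_congr rfl fun l _ => by ring
  rw [e, ← h, Pi.smul_apply, smul_eq_mul]
  ring

theorem ppZ_of_smul {x : Fin 6 → ℤ} {a : ℤ} (ha : 0 < a) (hx : a • x ∈ ppZ) : x ∈ ppZ := by
  obtain ⟨d, hd, c, hc, h⟩ := hx
  refine ⟨d * a, mul_pos hd ha, c, hc, fun i => ?_⟩
  rw [← h, Pi.smul_apply, smul_eq_mul]
  ring

theorem ppZ_sum {c : Fin 12 → ℤ} (hc : ∀ l, 0 ≤ c l) {f : Fin 12 → Fin 6 → ℤ}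
    (hf : ∀ l, f l ∈ ppZ) : ∑ l, c l • f l ∈ ppZ :=
  Finset.sum_induction _ (· ∈ ppZ) (fun _ _ => ppZ_add) ppZ_zero
    (fun l _ => ppZ_smul (hc l) (hf l))

/-- A linear map sending the generators into the cone preserves the cone. -/
theorem ppZ_map (f : (Fin 6 → ℤ) →ₗ[ℤ] (Fin 6 → ℤ))
    (hf : ∀ l, f (fun i => ppG i l) ∈ ppZ) {x : Fin 6 → ℤ} (hx : x ∈ ppZ) : f x ∈ ppZ := by
  obtain ⟨d, hd, c, hc, h⟩ := hx
  have e : d • x = ∑ l, c l • (fun i => ppG i l) := by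
    funext i
    rw [Pi.smul_apply, smul_eq_mul, h, Finset.sum_apply]
    exact Finset.sum_congr rfl fun l _ => by simp [mul_comm]
  apply ppZ_of_smul hd
  rw [← map_smul, e, map_sum]
  simp only [map_smul]
  exact ppZ_sum hc hf

/-- Nonnegative functionals on the cone. -/
theorem ppZ_nonneg (f : (Fin 6 → ℤ) →ₗ[ℤ] ℤ)
    (hf : ∀ l, 0 ≤ f (fun i => ppG i l)) {x : Fin 6 → ℤ} (hx : x ∈ ppZ) : 0 ≤ f x := by
  obtain ⟨d, hd, c, hc, h⟩ := hx
  have e : d • x = ∑ l, c l • (fun i => ppG i l) := by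
    funext i
    rw [Pi.smul_apply, smul_eq_mul, h, Finset.sum_apply]
    exact Finset.sum_congr rfl fun l _ => by simp [mul_comm]
  have e2 : d * f x = ∑ l, c l * f (fun i => ppG i l) := by
    rw [← smul_eq_mul, ← map_smul, e, map_sum]
    exact Finset.sum_congr rfl fun l _ => by rw [map_smul, smul_eq_mul]
  have : 0 ≤ d * f x := by
    rw [e2]
    exact Finset.sum_nonneg fun l _ => mul_nonneg (hc l) (hf l)
  exact nonneg_of_mul_nonneg_right this hd

/-- Positive functionals on the nonzero part of the cone. -/
theorem ppZ_pos (f : (Fin 6 → ℤ) →ₗ[ℤ] ℤ)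
    (hf : ∀ l, 0 < f (fun i => ppG i l)) {x : Fin 6 → ℤ} (hx : x ∈ ppZ) (hx0 : x ≠ 0) :
    0 < f x := by
  obtain ⟨d, hd, c, hc, h⟩ := hx
  have e : d • x = ∑ l, c l • (fun i => ppG i l) := by
    funext i
    rw [Pi.smul_apply, smul_eq_mul, h, Finset.sum_apply]
    exact Finset.sum_congr rfl fun l _ => by simp [mul_comm]
  have e2 : d * f x = ∑ l, c l * f (fun i => ppG i l) := by
    rw [← smul_eq_mul, ← map_smul, e, map_sum]
    exact Finset.sum_congr rfl fun l _ => by rw [map_smul, smul_eq_mul]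
  have hc0 : ∃ l, c l ≠ 0 := by
    by_contra hcon
    push Not at hcon
    apply hx0
    have : d • x = 0 := by rw [e]; simp [hcon]
    exact (smul_eq_zero.mp this).resolve_left hd.ne'
  obtain ⟨l0, hl0⟩ := hc0
  have : 0 < d * f x := by
    rw [e2]
    refine Finset.sum_pos' (fun l _ => mul_nonneg (hc l) (hf l).le) ⟨l0, Finset.mem_univ _, ?_⟩
    exact mul_pos (lt_of_le_of_ne (hc l0) (Ne.symm hl0)) (hf l0)
  exact (mul_pos_iff_of_pos_left hd).mp this

/-- The dual side of the ping-pong table. -/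
def ppY : Set (Fin 6 → ℤ) :=
  {y | 0 ≤ y 5 ∧ y 5 • ppV + y ∈ ppZ ∧ y 5 • ppV - y ∈ ppZ}

theorem ppY_add {x y : Fin 6 → ℤ} (hx : x ∈ ppY) (hy : y ∈ ppY) : x + y ∈ ppY := by
  refine ⟨add_nonneg hx.1 hy.1, ?_, ?_⟩
  · convert ppZ_add hx.2.1 hy.2.1 using 1
    rw [Pi.add_apply, add_smul]
    abel
  · convert ppZ_add hx.2.2 hy.2.2 using 1
    rw [Pi.add_apply, add_smul]
    abel

theorem ppY_smul {x : Fin 6 → ℤ} {a : ℤ} (ha : 0 ≤ a) (hx : x ∈ ppY) : a • x ∈ ppY := by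
  refine ⟨mul_nonneg ha hx.1, ?_, ?_⟩
  · convert ppZ_smul ha hx.2.1 using 1
    rw [Pi.smul_apply, smul_add, smul_assoc]
  · convert ppZ_smul ha hx.2.2 using 1
    rw [Pi.smul_apply, smul_sub, smul_assoc]

theorem ppV_mem : ppV ∈ ppZ :=
  ⟨1, one_pos, ![0, 0, 0, 0, 0, 1, 0, 0, 0, 0, 0, 1], by decide +kernel, by decide +kernel⟩

theorem ppE_mem {x : Fin 6 → ℤ} (hx : x ∈ ppZ) : ppE *ᵥ x ∈ ppZ := by
  refine ppZ_map (Matrix.mulVecLin ppE) (fun l => ?_) hx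
  refine ⟨1, one_pos, Pi.single (l + 6) 1, fun k => ?_, fun i => ?_⟩
  · by_cases h : k = l + 6
    · subst h; simp
    · simp [Pi.single_eq_of_ne h]
  · have := ppE_G i l
    rw [Matrix.mul_apply] at this
    simp [Matrix.mulVec, dotProduct, this, Pi.single_apply]

theorem ppE_apply_five (y : Fin 6 → ℤ) : (ppE *ᵥ y) 5 = - y 5 := by
  simp [Matrix.mulVec, dotProduct, ppE_five]

theorem ppY_E {y : Fin 6 → ℤ} (hy : y ∈ ppY) : -(ppE *ᵥ y) ∈ ppY := by
  refine ⟨?_, ?_, ?_⟩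
  · simpa [ppE_apply_five] using hy.1
  · convert ppE_mem hy.2.2 using 1
    rw [Matrix.mulVec_sub, Matrix.mulVec_smul, ppE_v, Pi.neg_apply, ppE_apply_five, neg_neg]
    abel
  · convert ppE_mem hy.2.1 using 1
    rw [Matrix.mulVec_add, Matrix.mulVec_smul, ppE_v, Pi.neg_apply, ppE_apply_five, neg_neg]
    abel

theorem ppM_col (k : Fin 12) (l : Fin 12) (i : Fin 6) :
    (ppM k *ᵥ fun i => ppG i l) i = (ppM k * ppG) i l := rfl

theorem ppM_mem (k : Fin 12) {x : Fin 6 → ℤ} (hx : x ∈ ppZ) : ppM k *ᵥ x ∈ ppY := by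
  let φ : (Fin 6 → ℤ) →ₗ[ℤ] ℤ := (LinearMap.proj 5).comp (Matrix.mulVecLin (ppM k))
  refine ⟨?_, ?_, ?_⟩
  · exact ppZ_nonneg φ (fun l => pp_phi_nonneg k l) hx
  · refine ppZ_map (φ.smulRight ppV + Matrix.mulVecLin (ppM k)) (fun l => ?_) hx
    exact ⟨ppDP k l, pp_DP k l, ppCP k l, pp_CP k l, fun i => pp_certP k l i⟩
  · refine ppZ_map (φ.smulRight ppV - Matrix.mulVecLin (ppM k)) (fun l => ?_) hx
    exact ⟨ppDQ k l, pp_DQ k l, ppCQ k l, pp_CQ k l, fun i => pp_certQ k l i⟩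

theorem ppM_pos (k : Fin 6) {x : Fin 6 → ℤ} (hx : x ∈ ppZ) (hx0 : x ≠ 0) :
    0 < (ppM (Fin.castLE (by omega) k) *ᵥ x) 5 :=
  ppZ_pos ((LinearMap.proj 5).comp (Matrix.mulVecLin (ppM (Fin.castLE (by omega) k))))
    (fun l => pp_phi_pos k l) hx hx0

theorem ppM_pow (k : Fin 6) : ppM (Fin.castLE (by omega) k) = ppR ^ ((k : ℕ) + 1) := by
  induction k using Fin.induction with
  | zero => rw [Fin.val_zero, zero_add, pow_one, ← ppM_zero]; rfl
  | succ k ih => rw [← ppM_step k, ih, ← pow_succ]; rfl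

theorem ppR_six (q : ℕ) : ppR ^ (6 * q) = 1 + (q : ℤ) • ppN := by
  have h6 : ppR ^ 6 = 1 + ppN := by rw [← ppM_five]; exact (ppM_pow 5).symm
  induction q with
  | zero => simp
  | succ q ih =>
    rw [Nat.mul_succ, pow_add, ih, h6, add_mul, mul_add, smul_mul_assoc, mul_add, ppN_sq]
    push_cast
    rw [add_smul]
    simp
    abel

theorem ppR_pow_mem {n : ℕ} (hn : n ≠ 0) {x : Fin 6 → ℤ} (hx : x ∈ ppZ) (hx0 : x ≠ 0) :
    ppR ^ n *ᵥ x ∈ ppY ∧ 0 < (ppR ^ n *ᵥ x) 5 := by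
  obtain ⟨q, k, rfl⟩ : ∃ (q : ℕ) (k : Fin 6), n = 6 * q + ((k : ℕ) + 1) :=
    ⟨(n - 1) / 6, ⟨(n - 1) % 6, Nat.mod_lt _ (by norm_num)⟩, by
      have := Nat.div_add_mod (n - 1) 6
      simp only
      omega⟩
  have e : ppR ^ (6 * q + ((k : ℕ) + 1)) *ᵥ x =
      ppM (Fin.castLE (by omega) k) *ᵥ x + (q : ℤ) • (ppM (Fin.natAdd 6 k) *ᵥ x) := by
    rw [pow_add, ppR_six, ← ppM_pow, ppM_N, add_mul, one_mul, smul_mul_assoc, Matrix.add_mulVec,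
      Matrix.smul_mulVec]
  have hq : (0 : ℤ) ≤ q := by positivity
  have h1 := ppM_mem (Fin.natAdd 6 k) hx
  rw [e]
  refine ⟨ppY_add (ppM_mem _ hx) (ppY_smul hq h1), ?_⟩
  have h2 := ppM_pos k hx hx0
  have h3 := mul_nonneg hq h1.1
  rw [Pi.add_apply, Pi.smul_apply, smul_eq_mul]
  linarith

/-! ### A ping-pong lemma -/

section PingPong

open Monoid Monoid.CoprodI

/-- A version of the ping-pong lemma in which the two sets need not be disjoint. -/
theorem pp_injective {G α : Type*} [Group G] [MulAction G α] (a b : G) (X Y : Set α) (p : α)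
    (hpX : p ∈ X) (hpY : p ∉ Y) (ha : ∀ n : ℤ, n ≠ 0 → ∀ y ∈ Y, a ^ n • y ∈ X)
    (hb : ∀ n : ℤ, n ≠ 0 → ∀ x ∈ X, b ^ n • x ∈ Y) :
    Function.Injective (FreeGroup.lift ![a, b]) := by
  have hcomp : FreeGroup.lift ![a, b] =
      (CoprodI.lift fun i : Fin 2 => FreeGroup.lift fun _ : Unit => ![a, b] i).comp
        (@freeGroupEquivCoprodI (Fin 2)).toMonoidHom := by
    ext i
    simp
  rw [hcomp, MonoidHom.coe_comp]
  refine Function.Injective.comp ?_ (MulEquiv.injective freeGroupEquivCoprodI)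
  let H : Fin 2 → Type := fun _ => FreeGroup Unit
  let f : ∀ i, H i →* G := fun i => FreeGroup.lift fun _ : Unit => ![a, b] i
  let S : Fin 2 → Set α := ![X, Y]
  have hpow : ∀ i (h : H i), h ≠ 1 → ∃ n : ℤ, n ≠ 0 ∧ f i h = (![a, b] i) ^ n := by
    intro i h hne
    refine ⟨FreeGroup.freeGroupUnitEquivInt h, fun h0 => hne ?_, ?_⟩
    · have := congrArg FreeGroup.freeGroupUnitEquivInt.symm h0
      rw [Equiv.symm_apply_apply] at this
      rw [this]
      simp [FreeGroup.freeGroupUnitEquivInt]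
    · have hh : h = (FreeGroup.of () ^ (FreeGroup.freeGroupUnitEquivInt h) : FreeGroup Unit) :=
        (FreeGroup.freeGroupUnitEquivInt.symm_apply_apply h).symm
      conv_lhs => rw [hh]
      change FreeGroup.lift (fun _ : Unit => ![a, b] i) _ = _
      rw [map_zpow, FreeGroup.lift_apply_of]
  have hpp : Pairwise fun i j => ∀ h : H i, h ≠ 1 → ∀ x ∈ S j, f i h • x ∈ S i := by
    intro i j hij h hne x hx
    obtain ⟨n, hn, hf⟩ := hpow i h hne
    rw [hf]
    fin_cases i <;> fin_cases j
    · exact absurd rfl hij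
    · exact ha n hn x hx
    · exact hb n hn x hx
    · exact absurd rfl hij
  have hword : ∀ {i j} (w : NeWord H i j) (k : Fin 2), j ≠ k → ∀ x ∈ S k,
      CoprodI.lift f w.prod • x ∈ S i := by
    intro i j w
    induction w with
    | singleton x hne_one => intro k hk; simpa using hpp hk x hne_one
    | append w₁ hne w₂ ih₁ ih₂ =>
      intro k hk x hx
      rw [NeWord.append_prod, map_mul, mul_smul]
      exact ih₁ _ hne _ (ih₂ _ hk x hx)
  -- words starting and ending with `b`
  have h11 : ∀ w : NeWord H 1 1, CoprodI.lift f w.prod ≠ 1 := by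
    intro w h
    have := hword w 0 (by decide) p hpX
    rw [h, one_smul] at this
    exact hpY this
  have hex : ∀ g : FreeGroup Unit, ∃ h : FreeGroup Unit, h ≠ 1 ∧ h * g ≠ 1 := by
    intro g
    have hinf : Infinite (FreeGroup Unit) :=
      Infinite.of_injective _ FreeGroup.freeGroupUnitEquivInt.symm.injective
    obtain ⟨h, hh⟩ := Infinite.exists_notMem_finset ({1, g⁻¹} : Finset (FreeGroup Unit))
    simp only [Finset.mem_insert, Finset.mem_singleton, not_or] at hh
    exact ⟨h, hh.1, fun h2 => hh.2 (eq_inv_of_mul_eq_one_left h2)⟩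
  have h10 : ∀ w : NeWord H 1 0, CoprodI.lift f w.prod ≠ 1 := by
    intro w heq
    obtain ⟨h, hn1, hnh⟩ := hex w.head
    let w' : NeWord H 1 1 :=
      NeWord.append (NeWord.mulHead w h hnh) (by decide)
        (NeWord.singleton (i := 1) (h⁻¹ : FreeGroup Unit) (inv_ne_one.mpr hn1))
    apply h11 w'
    simp only [w', NeWord.append_prod, NeWord.mulHead_prod, NeWord.prod_singleton, map_mul, heq,
      mul_one, lift_of]
    rw [← map_mul]
    exact (congrArg (f 1) (mul_inv_cancel h)).trans (map_one _)
  have h01 : ∀ w : NeWord H 0 1, CoprodI.lift f w.prod ≠ 1 := by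
    intro w heq
    apply h10 w.inv
    rw [NeWord.inv_prod, map_inv, heq, inv_one]
  have h00 : ∀ w : NeWord H 0 0, CoprodI.lift f w.prod ≠ 1 := by
    intro w heq
    obtain ⟨h, hn1, -⟩ := hex 1
    let w' : NeWord H 1 1 :=
      NeWord.append (NeWord.append (NeWord.singleton (i := 1) (h : FreeGroup Unit) hn1)
        (by decide) w) (by decide)
        (NeWord.singleton (i := 1) (h⁻¹ : FreeGroup Unit) (inv_ne_one.mpr hn1))
    apply h11 w'
    simp only [w', NeWord.append_prod, NeWord.prod_singleton, map_mul, heq, mul_one, lift_of]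
    rw [← map_mul]
    exact (congrArg (f 1) (mul_inv_cancel h)).trans (map_one _)
  have hall : ∀ {i j} (w : NeWord H i j), CoprodI.lift f w.prod ≠ 1 := by
    intro i j w
    fin_cases i <;> fin_cases j
    · exact h00 w
    · exact h01 w
    · exact h10 w
    · exact h11 w
  change Function.Injective (CoprodI.lift f)
  classical
  apply (injective_iff_map_eq_one (CoprodI.lift f)).mpr
  intro m hm
  obtain ⟨w, rfl⟩ := (CoprodI.Word.equiv (M := H)).symm.surjective m
  by_cases hw : w = Word.empty
  · rw [hw]
    exact Word.prod_empty
  · obtain ⟨i, j, w', rfl⟩ := NeWord.of_word w hw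
    exact absurd hm (hall w')

end PingPong

/-- Consequences of freeness of a pair of elements. -/
theorem pp_consequences {G : Type*} [Group G] (a b : G)
    (hinj : Function.Injective (FreeGroup.lift ![a, b])) :
    ¬ IsOfFinOrder a ∧ ¬ IsOfFinOrder b ∧
    Function.Injective
      (Monoid.Coprod.lift (Subgroup.zpowers a).subtype (Subgroup.zpowers b).subtype) ∧
    (Monoid.Coprod.lift (Subgroup.zpowers a).subtype (Subgroup.zpowers b).subtype).range =
      Subgroup.closure {a, b} ∧
    Nonempty ((Subgroup.closure {a, b} : Subgroup G) ≃* FreeGroup (Fin 2)) := by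
  have ha : FreeGroup.lift ![a, b] (FreeGroup.of 0) = a := by simp
  have hb : FreeGroup.lift ![a, b] (FreeGroup.of 1) = b := by simp
  have hord : ∀ i : Fin 2, ¬ IsOfFinOrder (FreeGroup.of i) := by
    intro i h
    rw [isOfFinOrder_iff_pow_eq_one] at h
    obtain ⟨n, hn, h⟩ := h
    have := congrArg (FreeGroup.lift fun _ : Fin 2 => Multiplicative.ofAdd (1 : ℤ)) h
    rw [map_pow, FreeGroup.lift_apply_of, MonoidHom.map_one, ← ofAdd_nsmul] at this
    have h2 : n • (1 : ℤ) = 0 := this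
    simp at h2
    omega
  have hfa : ¬ IsOfFinOrder a := by
    rw [← ha, hinj.isOfFinOrder_iff]; exact hord 0
  have hfb : ¬ IsOfFinOrder b := by
    rw [← hb, hinj.isOfFinOrder_iff]; exact hord 1
  have hrange : (FreeGroup.lift ![a, b]).range = Subgroup.closure {a, b} := by
    rw [FreeGroup.range_lift_eq_closure]
    congr 1
    ext x
    simp [eq_comm]
    exact or_comm
  refine ⟨hfa, hfb, ?_, ?_, ?_⟩
  · have key : ∀ (c : G) (i : Fin 2), FreeGroup.lift ![a, b] (FreeGroup.of i) = c →
        ∃ s : Subgroup.zpowers c →* FreeGroup (Fin 2),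
          (∀ n : ℤ, s ⟨c ^ n, n, rfl⟩ = FreeGroup.of i ^ n) := by
      intro c i hc
      have hz : Subgroup.zpowers c ≤ (FreeGroup.lift ![a, b]).range := by
        rw [Subgroup.zpowers_le, ← hc]
        exact ⟨_, rfl⟩
      let e := MonoidHom.ofInjective hinj
      refine ⟨e.symm.toMonoidHom.comp (Subgroup.inclusion hz), fun n => ?_⟩
      change e.symm _ = _
      rw [MulEquiv.symm_apply_eq]
      apply Subtype.ext
      change c ^ n = FreeGroup.lift ![a, b] (FreeGroup.of i ^ n)
      rw [map_zpow, hc]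
    obtain ⟨s, hs⟩ := key a 0 ha
    obtain ⟨s', hs'⟩ := key b 1 hb
    let S := Monoid.Coprod.lift s s'
    let T : FreeGroup (Fin 2) →* Monoid.Coprod (Subgroup.zpowers a) (Subgroup.zpowers b) :=
      FreeGroup.lift ![Monoid.Coprod.inl ⟨a, Subgroup.mem_zpowers a⟩,
        Monoid.Coprod.inr ⟨b, Subgroup.mem_zpowers b⟩]
    have hTS : T.comp S = MonoidHom.id _ := by
      apply Monoid.Coprod.hom_ext
      · ext ⟨x, n, rfl⟩
        change T (S (Monoid.Coprod.inl ⟨a ^ n, n, rfl⟩)) = Monoid.Coprod.inl ⟨a ^ n, n, rfl⟩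
        simp only [S, Monoid.Coprod.lift_apply_inl, hs, map_zpow, T, FreeGroup.lift_apply_of]
        exact (map_zpow (Monoid.Coprod.inl : Subgroup.zpowers a →*
          Monoid.Coprod (Subgroup.zpowers a) (Subgroup.zpowers b)) ⟨a, Subgroup.mem_zpowers a⟩ n).symm
      · ext ⟨x, n, rfl⟩
        change T (S (Monoid.Coprod.inr ⟨b ^ n, n, rfl⟩)) = Monoid.Coprod.inr ⟨b ^ n, n, rfl⟩
        simp only [S, Monoid.Coprod.lift_apply_inr, hs', map_zpow, T, FreeGroup.lift_apply_of]
        exact (map_zpow (Monoid.Coprod.inr : Subgroup.zpowers b →*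
          Monoid.Coprod (Subgroup.zpowers a) (Subgroup.zpowers b)) ⟨b, Subgroup.mem_zpowers b⟩ n).symm
    have hfac : Monoid.Coprod.lift (Subgroup.zpowers a).subtype (Subgroup.zpowers b).subtype =
        (FreeGroup.lift ![a, b]).comp S := by
      apply Monoid.Coprod.hom_ext
      · ext ⟨x, n, rfl⟩
        change Monoid.Coprod.lift (Subgroup.zpowers a).subtype (Subgroup.zpowers b).subtype
          (Monoid.Coprod.inl ⟨a ^ n, n, rfl⟩) =
          FreeGroup.lift ![a, b] (S (Monoid.Coprod.inl ⟨a ^ n, n, rfl⟩))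
        simp only [S, Monoid.Coprod.lift_apply_inl, hs, map_zpow, ha]
        rfl
      · ext ⟨x, n, rfl⟩
        change Monoid.Coprod.lift (Subgroup.zpowers a).subtype (Subgroup.zpowers b).subtype
          (Monoid.Coprod.inr ⟨b ^ n, n, rfl⟩) =
          FreeGroup.lift ![a, b] (S (Monoid.Coprod.inr ⟨b ^ n, n, rfl⟩))
        simp only [S, Monoid.Coprod.lift_apply_inr, hs', map_zpow, hb]
        rfl
    rw [hfac, MonoidHom.coe_comp]
    refine hinj.comp (Function.LeftInverse.injective (g := T) fun x => ?_)
    exact DFunLike.congr_fun hTS x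
  · rw [Monoid.Coprod.range_lift, Subgroup.range_subtype, Subgroup.range_subtype,
      Subgroup.zpowers_eq_closure, Subgroup.zpowers_eq_closure, ← Subgroup.closure_union]
    rfl
  · exact ⟨((MonoidHom.ofInjective hinj).trans (MulEquiv.subgroupCongr hrange)).symm⟩

/-! ### The ping-pong table -/

/-- The action of `GL(6, ℤ)` on integer column vectors. -/
@[reducible] def ppAction : MulAction (GL (Fin 6) ℤ) (Fin 6 → ℤ) where
  smul g x := (g : Matrix (Fin 6) (Fin 6) ℤ) *ᵥ x
  one_smul x := by
    change ((1 : GL (Fin 6) ℤ) : Matrix (Fin 6) (Fin 6) ℤ) *ᵥ x = x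
    rw [Units.val_one, Matrix.one_mulVec]
  mul_smul g h x := by
    change ((g * h : GL (Fin 6) ℤ) : Matrix (Fin 6) (Fin 6) ℤ) *ᵥ x =
      (g : Matrix (Fin 6) (Fin 6) ℤ) *ᵥ ((h : Matrix (Fin 6) (Fin 6) ℤ) *ᵥ x)
    rw [Units.val_mul, Matrix.mulVec_mulVec]

/-- One side of the ping-pong table. -/
def ppX' : Set (Fin 6 → ℤ) := {x | x ≠ 0 ∧ (x ∈ ppZ ∨ -x ∈ ppZ)}

/-- The other side of the ping-pong table. -/
def ppY' : Set (Fin 6 → ℤ) := {y | y 5 ≠ 0 ∧ (y ∈ ppY ∨ -y ∈ ppY)}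

theorem ppY'_neg {y : Fin 6 → ℤ} (hy : y ∈ ppY') : -y ∈ ppY' := by
  refine ⟨by simpa using hy.1, ?_⟩
  rw [neg_neg]
  exact hy.2.symm

theorem ppX'_neg {y : Fin 6 → ℤ} (hy : y ∈ ppX') : -y ∈ ppX' := by
  refine ⟨by simpa using hy.1, ?_⟩
  rw [neg_neg]
  exact hy.2.symm

theorem ppY'_E {y : Fin 6 → ℤ} (hy : y ∈ ppY') : ppE *ᵥ y ∈ ppY' := by
  refine ⟨by simpa [ppE_apply_five] using hy.1, ?_⟩
  rcases hy.2 with h | h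
  · exact Or.inr (ppY_E h)
  · left
    have := ppY_E h
    rwa [Matrix.mulVec_neg, neg_neg] at this

theorem ppX'_E {x : Fin 6 → ℤ} (hx : x ∈ ppX') : ppE *ᵥ x ∈ ppX' := by
  refine ⟨fun h => hx.1 ?_, ?_⟩
  · have h2 := congrArg (fun z => ppE *ᵥ z) h
    simpa [Matrix.mulVec_mulVec, ppE_sq] using h2
  · rcases hx.2 with h | h
    · exact Or.inl (ppE_mem h)
    · right
      have := ppE_mem h
      rwa [Matrix.mulVec_neg] at this

theorem ppT_step {y : Fin 6 → ℤ} (hy : y ∈ ppY) (n : ℤ) (hn : n ≠ 0) :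
    y + (n * y 5) • ppV ∈ ppZ ∨ -(y + (n * y 5) • ppV) ∈ ppZ := by
  rcases lt_or_gt_of_ne hn with h | h
  · right
    have e : -(y + (n * y 5) • ppV) = (y 5 • ppV - y) + ((-n - 1) * y 5) • ppV := by
      funext i
      simp
      ring
    rw [e]
    exact ppZ_add hy.2.2 (ppZ_smul (mul_nonneg (by omega) hy.1) ppV_mem)
  · left
    have e : y + (n * y 5) • ppV = (y 5 • ppV + y) + ((n - 1) * y 5) • ppV := by
      funext i
      simp
      ring
    rw [e]
    exact ppZ_add hy.2.1 (ppZ_smul (mul_nonneg (by omega) hy.1) ppV_mem)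

theorem ppV_five : ppV 5 = 0 := by decide

theorem ppT_mem {y : Fin 6 → ℤ} (hy : y ∈ ppY') (n : ℤ) (hn : n ≠ 0) :
    y + (n * y 5) • ppV ∈ ppX' := by
  refine ⟨fun h => hy.1 ?_, ?_⟩
  · have := congrFun h 5
    simpa [ppV_five] using this
  · rcases hy.2 with h | h
    · exact ppT_step h n hn
    · have e : y + (n * y 5) • ppV = -(-y + (n * (-y) 5) • ppV) := by
        funext i
        simp
        ring
      rw [e, neg_neg]
      exact (ppT_step h n hn).symm

theorem ppR_mem {x : Fin 6 → ℤ} (hx : x ∈ ppX') {n : ℕ} (hn : n ≠ 0) :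
    (-ppR) ^ n *ᵥ x ∈ ppY' := by
  have h1 : ppR ^ n *ᵥ x ∈ ppY' := by
    rcases hx.2 with h | h
    · obtain ⟨h1, h2⟩ := ppR_pow_mem hn h hx.1
      exact ⟨h2.ne', Or.inl h1⟩
    · obtain ⟨h1, h2⟩ := ppR_pow_mem hn h (neg_ne_zero.mpr hx.1)
      have := ppY'_neg ⟨h2.ne', Or.inl h1⟩
      rwa [Matrix.mulVec_neg, neg_neg] at this
  rcases Nat.even_or_odd n with h | h
  · rwa [h.neg_pow]
  · rw [h.neg_pow, Matrix.neg_mulVec]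
    exact ppY'_neg h1

/-- The involution `ppE` as an element of `GL(6, ℤ)`. -/
def ppEu : GL (Fin 6) ℤ := ⟨ppE, ppE, ppE_sq, ppE_sq⟩

/-- The matrix of `t`. -/
def ppT : Matrix (Fin 6) (Fin 6) ℤ :=
  !![1, 0, 0, 0, 0, -10;
     0, 1, 0, 0, 0, 7;
     0, 0, 1, 0, 0, -30;
     0, 0, 0, 1, 0, 7;
     0, 0, 0, 0, 1, -10;
     0, 0, 0, 0, 0, 1]

theorem ppT_eq : ∀ i j : Fin 6, ppT i j =
    ((if i = j then 1 else 0) + (if j = 5 then ppV i else 0) : ℤ) := by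
  have h : ppT = Matrix.of fun i j : Fin 6 =>
      ((if i = j then 1 else 0) + (if j = 5 then ppV i else 0) : ℤ) := by decide +kernel
  intro i j
  rw [h]
  rfl

theorem ppT_mulVec (y : Fin 6 → ℤ) : ppT *ᵥ y = y + y 5 • ppV := by
  funext i
  simp [Matrix.mulVec, dotProduct, ppT_eq, add_mul, Finset.sum_add_distrib]
  ring

theorem pp_AT : companionF * ppT = companionG := by decide +kernel

theorem pp_TA : ppT * companionF = -ppR := by decide +kernel

theorem ppT_zpow (t : GL (Fin 6) ℤ) (ht : (t : Matrix (Fin 6) (Fin 6) ℤ) = ppT) (n : ℤ)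
    (y : Fin 6 → ℤ) :
    ((t ^ n : GL (Fin 6) ℤ) : Matrix (Fin 6) (Fin 6) ℤ) *ᵥ y = y + (n * y 5) • ppV := by
  induction n generalizing y with
  | zero => simp
  | succ n ih =>
    rw [_root_.zpow_add_one, Units.val_mul, ← Matrix.mulVec_mulVec, ht, ppT_mulVec, ih]
    funext i
    simp [ppV_five]
    ring
  | pred n ih =>
    obtain ⟨z, rfl⟩ : ∃ z, y = ppT *ᵥ z :=
      ⟨((t⁻¹ : GL (Fin 6) ℤ) : Matrix (Fin 6) (Fin 6) ℤ) *ᵥ y, by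
        rw [← ht, Matrix.mulVec_mulVec, ← Units.val_mul, mul_inv_cancel, Units.val_one,
          Matrix.one_mulVec]⟩
    rw [← ht, Matrix.mulVec_mulVec, ← Units.val_mul, _root_.zpow_sub_one, inv_mul_cancel_right, ih, ht,
      ppT_mulVec]
    funext i
    simp [ppV_five]
    ring

theorem ppR_zpow (r : GL (Fin 6) ℤ) (hr : (r : Matrix (Fin 6) (Fin 6) ℤ) = -ppR) (n : ℤ)
    (hn : n ≠ 0) {x : Fin 6 → ℤ} (hx : x ∈ ppX') :
    ((r ^ n : GL (Fin 6) ℤ) : Matrix (Fin 6) (Fin 6) ℤ) *ᵥ x ∈ ppY' := by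
  obtain ⟨m, rfl | rfl⟩ := n.eq_nat_or_neg
  · rw [zpow_natCast, Units.val_pow_eq_pow_val, hr]
    exact ppR_mem hx (by omega)
  · have hinv : r⁻¹ = ppEu * r * ppEu⁻¹ := by
      rw [inv_eq_iff_mul_eq_one]
      apply Units.ext
      rw [Units.val_mul, Units.val_mul, Units.val_mul, hr, Units.val_one]
      change -ppR * (ppE * -ppR * ppE) = 1
      rw [mul_neg, neg_mul, neg_mul, mul_neg, neg_neg]
      exact ppRER
    rw [_root_.zpow_neg, zpow_natCast, ← inv_pow, hinv, conj_pow, Units.val_mul, Units.val_mul,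
      Units.val_pow_eq_pow_val, hr, ← Matrix.mulVec_mulVec, ← Matrix.mulVec_mulVec]
    exact ppY'_E (ppR_mem (ppX'_E hx) (by omega))

theorem ppV_mem_X' : ppV ∈ ppX' := ⟨by decide, Or.inl ppV_mem⟩

theorem ppV_not_mem_Y' : ppV ∉ ppY' := fun h => h.1 ppV_five

/-- The hypergeometric group with `α = (0,0,0,0,0,0)`, `β = (1/2,1/2,1/3,2/3,1/3,2/3)` is
free of rank two: `t = A⁻¹B` and `r = A⁻¹BA` have infinite order, generate the group
generated by `A` and `B`, and the group is the internal free product of `⟨t⟩` and `⟨r⟩`;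
in particular it is isomorphic to `ℤ * ℤ`, the free group of rank `2`. -/
theorem hypergeometric_free_of_rank_two
    (A B : GL (Fin 6) ℤ)
    (hA : (A : Matrix (Fin 6) (Fin 6) ℤ) = companionF)
    (hB : (B : Matrix (Fin 6) (Fin 6) ℤ) = companionG) :
    ¬ IsOfFinOrder (A⁻¹ * B) ∧ ¬ IsOfFinOrder (A⁻¹ * B * A) ∧
    Subgroup.closure {A, B} = Subgroup.closure {A⁻¹ * B, A⁻¹ * B * A} ∧
    Function.Injective
      (Monoid.Coprod.lift (Subgroup.zpowers (A⁻¹ * B)).subtype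
        (Subgroup.zpowers (A⁻¹ * B * A)).subtype) ∧
    (Monoid.Coprod.lift (Subgroup.zpowers (A⁻¹ * B)).subtype
        (Subgroup.zpowers (A⁻¹ * B * A)).subtype).range = Subgroup.closure {A, B} ∧
    Nonempty ((Subgroup.closure {A, B} : Subgroup (GL (Fin 6) ℤ)) ≃* FreeGroup (Fin 2)) := by
  have ht : ((A⁻¹ * B : GL (Fin 6) ℤ) : Matrix (Fin 6) (Fin 6) ℤ) = ppT := by
    have h : ((A : GL (Fin 6) ℤ) : Matrix (Fin 6) (Fin 6) ℤ) * ppT = B := by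
      rw [hA, hB, pp_AT]
    rw [Units.val_mul, ← h, ← mul_assoc, ← Units.val_mul, inv_mul_cancel, Units.val_one, one_mul]
  have hr : ((A⁻¹ * B * A : GL (Fin 6) ℤ) : Matrix (Fin 6) (Fin 6) ℤ) = -ppR := by
    rw [Units.val_mul, ht, hA, pp_TA]
  have hcl : Subgroup.closure {A, B} = Subgroup.closure {A⁻¹ * B, A⁻¹ * B * A} := by
    apply le_antisymm
    · rw [Subgroup.closure_le]
      have h1 : A⁻¹ * B ∈ Subgroup.closure {A⁻¹ * B, A⁻¹ * B * A} :=
        Subgroup.subset_closure (by simp)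
      have h2 : A⁻¹ * B * A ∈ Subgroup.closure {A⁻¹ * B, A⁻¹ * B * A} :=
        Subgroup.subset_closure (by simp)
      have h3 : A ∈ Subgroup.closure {A⁻¹ * B, A⁻¹ * B * A} := by
        have := mul_mem (inv_mem h1) h2
        rwa [inv_mul_cancel_left] at this
      have h4 : B ∈ Subgroup.closure {A⁻¹ * B, A⁻¹ * B * A} := by
        have := mul_mem h3 h1
        rwa [mul_inv_cancel_left] at this
      rintro x (rfl | rfl)
      · exact h3
      · exact h4
    · rw [Subgroup.closure_le]
      have h1 : A ∈ Subgroup.closure {A, B} := Subgroup.subset_closure (by simp)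
      have h2 : B ∈ Subgroup.closure {A, B} := Subgroup.subset_closure (by simp)
      have h3 := mul_mem (inv_mem h1) h2
      rintro x (rfl | rfl)
      · exact h3
      · exact mul_mem h3 h1
  have hinj : Function.Injective (FreeGroup.lift ![A⁻¹ * B, A⁻¹ * B * A]) := by
    letI := ppAction
    refine pp_injective _ _ ppX' ppY' ppV ppV_mem_X' ppV_not_mem_Y' (fun n hn y hy => ?_)
      (fun n hn x hx => ?_)
    · change (((A⁻¹ * B) ^ n : GL (Fin 6) ℤ) : Matrix (Fin 6) (Fin 6) ℤ) *ᵥ y ∈ ppX'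
      rw [ppT_zpow _ ht]
      exact ppT_mem hy n hn
    · exact ppR_zpow _ hr n hn hx
  obtain ⟨h1, h2, h3, h4, h5⟩ := pp_consequences _ _ hinj
  rw [hcl]
  exact ⟨h1, h2, rfl, h3, h4, h5⟩
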